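/- Let ε ∈ (0,1) be irrational with continued fraction expansion ε = [0; a_1, a_2, …] whose partial quotients are bounded, set K := sup_{n} a_n, let ℓ satisfy max{ε, 1−ε} < ℓ < 1, and let x0 ∈ [0,ℓ). Then the index of the 3iet word satisfies ⌊K/2⌋ ≤ ind(u_{ε,ℓ,x0}) ≤ K + 3. -/

import Mathlib

/-!
The exchange `T3 ε ℓ` is the map induced on `[0, ℓ)` by the rotation `x ↦ x - ε` of the circle
`ℝ / ℤ`: the letters `A`, `C` are one rotation step and `B` is two (`tau`, `cc`, `visit`).
Write `q_n` for the denominators of the convergents and `d_n = |q_n ε - p_n|`.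

*Upper bound.* If the letters at `k` and `k + n` agree for all `k < (K+2) n`, then on this stretch
of the orbit `T3^[n]` is the translation by a fixed `δ = P - N ε`, where `N` is the number of
rotation steps of one period. Both `y` and `y + δ` lie in `[0, ℓ)` for all points `y` of the
stretch, so the stretch misses an end interval of `[0, ℓ)` of length `|δ|`. If
`q_r ≤ N < q_{r+1}`, best approximation (`best_approx`) gives `|δ| ≥ d_r`, whereas any half-open
arc of length `d_r` is met within `q_{r+1} + q_r ≤ (K+2) q_r ≤ (K+2) N` rotation steps (`hit`).
So no `(K+3)`-rd power occurs (`no_high_power`).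

*Lower bound.* Let the partial quotient `K` be attained, so that `q_{r+1} ≥ K N` with `N = q_r`,
and let `δ = p_r - q_r ε`. A point whose first `t N + 1` rotation images do not cross the cut
points `0` and `ℓ` when translated by `δ` starts a `(t+1)`-st power (`period_of_safe`). The points
violating this form `2 (t N + 1)` arcs of length `d_r`. For `t + 1 = ⌊K/2⌋` their total length is
at most `q_{r+1} d_r < 1`, so the remaining points contain a nonempty open set, which the orbit of
`x0` meets by density (`exists_avoid`, `exists_safe`).
-/

/-- The alphabet of 3iet words. -/
inductive L3 | A | B | C
deriving DecidableEq, Inhabited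

/-- The three-interval exchange transformation `T_{ε,ℓ}`. -/
noncomputable def T3 (ε ℓ : ℝ) (x : ℝ) : ℝ :=
  if x < ℓ - 1 + ε then x + 1 - ε
  else if x < ε then x + 1 - 2*ε
  else x - ε

/-- The 3iet word `u_{ε,ℓ,x0}` coding the orbit of `x0` under `T_{ε,ℓ}`. -/
noncomputable def u3 (ε ℓ x0 : ℝ) (n : ℕ) : L3 :=
  if (T3 ε ℓ)^[n] x0 < ℓ - 1 + ε then L3.A
  else if (T3 ε ℓ)^[n] x0 < ε then L3.B
  else L3.C

/-- The two-interval exchange transformation `T_ε`. -/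
noncomputable def T2 (ε : ℝ) (x : ℝ) : ℝ := if x < ε then x + 1 - ε else x - ε

/-- The Sturmian word `u_{ε,x0}` of slope `ε` coding the orbit of `x0` under `T_ε`
(letter `0` is `false`, letter `1` is `true`). -/
noncomputable def u2 (ε x0 : ℝ) (n : ℕ) : Bool := if (T2 ε)^[n] x0 < ε then false else true

/-- `w` is a factor of the infinite word `u`. -/
def IsFactor {α : Type*} (w : List α) (u : ℕ → α) : Prop :=
  ∃ i : ℕ, w = (List.range w.length).map fun j => u (i + j)

/-- The prefix of length `m` of the periodic infinite word `www⋯`;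
for `|w| ≤ m` this is the fractional power `w^{m/|w|}`. -/
def powPrefix {α : Type*} [Inhabited α] (w : List α) (m : ℕ) : List α :=
  (List.range m).map fun j => w.getD (j % w.length) default

/-- The index of the factor `w` in the infinite word `u`:
`sup {r ∈ ℚ, r ≥ 1, r|w| ∈ ℕ | w^r is a factor of u}`, as an element of `ℝ ∪ {+∞}`. -/
noncomputable def factorIndex {α : Type*} [Inhabited α] (u : ℕ → α) (w : List α) : EReal :=
  sSup {x : EReal | ∃ m : ℕ, w.length ≤ m ∧ IsFactor (powPrefix w m) u ∧
    x = (((m : ℝ) / (w.length : ℝ) : ℝ) : EReal)}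

/-- The index of the infinite word `u`: `sup {ind(w) | w a nonempty factor of u}`. -/
noncomputable def wordIndex {α : Type*} [Inhabited α] (u : ℕ → α) : EReal :=
  sSup {x : EReal | ∃ w : List α, w ≠ [] ∧ IsFactor w u ∧ x = factorIndex u w}

/-- The Gauss map `x ↦ {1/x}`. -/
noncomputable def gaussMap (x : ℝ) : ℝ := Int.fract x⁻¹

/-- `cfa ε n` is the partial quotient `a_{n+1}` of the continued fraction
expansion `ε = [0; a₁, a₂, a₃, …]` of the irrational `ε ∈ (0,1)`. -/
noncomputable def cfa (ε : ℝ) (n : ℕ) : ℕ := ⌊(gaussMap^[n] ε)⁻¹⌋₊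

/-- The morphism `σ01 : A ↦ 0, B ↦ 01, C ↦ 1`. -/
def sigma01 : L3 → List Bool
  | L3.A => [false]
  | L3.B => [false, true]
  | L3.C => [true]

/-- The morphism `σ10 : A ↦ 0, B ↦ 10, C ↦ 1`. -/
def sigma10 : L3 → List Bool
  | L3.A => [false]
  | L3.B => [true, false]
  | L3.C => [true]

/-- The image `φ(u₀)φ(u₁)φ(u₂)⋯` of an infinite word `u` under a (nonerasing) morphism `φ`. -/
def morphWord (φ : L3 → List Bool) (u : ℕ → L3) (m : ℕ) : Bool :=
  ((List.range (m+1)).flatMap fun k => φ (u k)).getD m false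

/-- `u` is a uniformly recurrent infinite word: every factor occurs infinitely often
with bounded gaps (every window of some length `R` contains an occurrence). -/
def UniformlyRecurrent {α : Type*} (u : ℕ → α) : Prop :=
  ∀ w : List α, IsFactor w u → ∃ R : ℕ, ∀ i : ℕ, ∃ j : ℕ, i ≤ j ∧ j < i + R ∧
    w = (List.range w.length).map fun t => u (j + t)

/-- `u` is eventually periodic. -/
def EventuallyPeriodic {α : Type*} (u : ℕ → α) : Prop :=
  ∃ N p : ℕ, 0 < p ∧ ∀ n : ℕ, N ≤ n → u (n + p) = u n

/-- The standard words of `ε = [0; a₁, a₂, …]`, with the index shifted by one: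
`sw ε 0 = s₋₁ = 1`, `sw ε 1 = s₀ = 0`, `sw ε 2 = s₁ = s₀^{a₁-1} s₋₁`, and
`sw ε (n+3) = s_{n+2} = s_{n+1}^{a_{n+2}} s_n`. -/
noncomputable def sw (ε : ℝ) : ℕ → List Bool
  | 0 => [true]
  | 1 => [false]
  | 2 => (List.replicate (cfa ε 0 - 1) ([false] : List Bool)).flatten ++ [true]
  | (n+3) => (List.replicate (cfa ε (n+1)) (sw ε (n+2))).flatten ++ sw ε (n+1)

/-- Denominators of the convergents of `ε`, shifted by one: `qq ε 0 = q₋₁ = 0`,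
`qq ε 1 = q₀ = 1`, and `qq ε (n+2) = q_{n+1} = a_{n+1} q_n + q_{n-1}`. -/
noncomputable def qq (ε : ℝ) : ℕ → ℕ
  | 0 => 0
  | 1 => 1
  | (n+2) => cfa ε n * qq ε (n+1) + qq ε n

/-- `u` is a 3iet word. -/
def Is3ietWord (u : ℕ → L3) : Prop :=
  ∃ ε ℓ x0 : ℝ, Irrational ε ∧ 0 < ε ∧ ε < 1 ∧ max ε (1 - ε) < ℓ ∧ ℓ < 1 ∧
    x0 ∈ Set.Ico 0 ℓ ∧ u = u3 ε ℓ x0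

/-- `v` is a Sturmian word. -/
def IsSturmianWord (v : ℕ → Bool) : Prop :=
  ∃ ε x0 : ℝ, Irrational ε ∧ 0 < ε ∧ ε < 1 ∧ x0 ∈ Set.Ico (0:ℝ) 1 ∧ v = u2 ε x0

/-- The infinite binary word `v1` is amicable with `v2` (`v1 ∝ v2`). -/
def AmicableInf (v1 v2 : ℕ → Bool) : Prop :=
  ∃ w : ℕ → L3, v1 = morphWord sigma01 w ∧ v2 = morphWord sigma10 w

/-- The morphism `Φ_k : A ↦ 0, B ↦ 01^{k+1}, C ↦ 01^k`. -/
def Phi (k : ℕ) : L3 → List Bool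
  | L3.A => [false]
  | L3.B => false :: List.replicate (k+1) true
  | L3.C => false :: List.replicate k true

/-- The infinite word `B₀B₁B₂⋯` obtained by concatenating the sequence of
(nonempty) blocks `B`. -/
def concatOfBlocks (B : ℕ → List Bool) (m : ℕ) : Bool :=
  ((List.range (m+1)).flatMap B).getD m false

/-! ### Continued fractions: denominators and approximation errors -/

/-- Numerators of the convergents of `ε`, with the same index shift as `qq`:
`pp ε 0 = p₋₁ = 1`, `pp ε 1 = p₀ = 0`. -/
noncomputable def pp (ε : ℝ) : ℕ → ℕ
  | 0 => 1
  | 1 => 0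
  | (n+2) => cfa ε n * pp ε (n+1) + pp ε n

/-- The signed approximation error `q ε - p` of the convergent with shifted index `n`. -/
noncomputable def dd (ε : ℝ) (n : ℕ) : ℝ := qq ε n * ε - pp ε n

lemma gauss_iterate {ε : ℝ} (hirr : Irrational ε) (h0 : 0 < ε) (h1 : ε < 1) (n : ℕ) :
    Irrational (gaussMap^[n] ε) ∧ 0 < gaussMap^[n] ε ∧ gaussMap^[n] ε < 1 := by
  induction n with
  | zero => exact ⟨hirr, h0, h1⟩
  | succ n ih =>
    rw [Function.iterate_succ_apply']
    have h : Irrational (gaussMap (gaussMap^[n] ε)) := by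
      unfold gaussMap
      rw [← Int.self_sub_floor]
      exact ih.1.inv.sub_intCast _
    refine ⟨h, lt_of_le_of_ne (Int.fract_nonneg _) ?_, Int.fract_lt_one _⟩
    intro h'
    exact h ⟨0, by rw [← h']; simp⟩

lemma cfa_add_gauss {ε : ℝ} (hirr : Irrational ε) (h0 : 0 < ε) (h1 : ε < 1) (n : ℕ) :
    (cfa ε n : ℝ) + gaussMap^[n+1] ε = (gaussMap^[n] ε)⁻¹ := by
  have h := gauss_iterate hirr h0 h1 n
  rw [Function.iterate_succ_apply']
  unfold cfa
  rw [natCast_floor_eq_intCast_floor (inv_nonneg.2 h.2.1.le)]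
  exact Int.floor_add_fract _

lemma one_le_cfa {ε : ℝ} (hirr : Irrational ε) (h0 : 0 < ε) (h1 : ε < 1) (n : ℕ) :
    1 ≤ cfa ε n := by
  have h := gauss_iterate hirr h0 h1 n
  unfold cfa
  rw [Nat.one_le_floor_iff]
  exact (one_lt_inv₀ h.2.1).2 h.2.2 |>.le

lemma qq_rec (ε : ℝ) (n : ℕ) : qq ε (n+2) = cfa ε n * qq ε (n+1) + qq ε n := rfl

lemma pp_rec (ε : ℝ) (n : ℕ) : pp ε (n+2) = cfa ε n * pp ε (n+1) + pp ε n := rfl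

lemma one_le_qq {ε : ℝ} (hirr : Irrational ε) (h0 : 0 < ε) (h1 : ε < 1) (n : ℕ) :
    1 ≤ qq ε (n+1) := by
  induction n with
  | zero => exact le_refl 1
  | succ n ih =>
    rw [qq_rec]
    nlinarith [one_le_cfa hirr h0 h1 n]

lemma qq_le_succ {ε : ℝ} (hirr : Irrational ε) (h0 : 0 < ε) (h1 : ε < 1) (n : ℕ) :
    qq ε n ≤ qq ε (n+1) := by
  cases n with
  | zero => exact Nat.zero_le _
  | succ n =>
    rw [qq_rec]
    nlinarith [one_le_cfa hirr h0 h1 n]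

lemma le_qq {ε : ℝ} (hirr : Irrational ε) (h0 : 0 < ε) (h1 : ε < 1) (n : ℕ) :
    n ≤ qq ε (n+1) := by
  induction n with
  | zero => exact Nat.zero_le _
  | succ n ih =>
    rw [qq_rec]
    cases n with
    | zero => nlinarith [one_le_cfa hirr h0 h1 0, one_le_qq hirr h0 h1 0]
    | succ n =>
      nlinarith [one_le_cfa hirr h0 h1 (n+1), one_le_qq hirr h0 h1 n]

/-- Consecutive approximation errors alternate in sign, and their ratio is the Gauss iterate. -/
lemma dd_succ {ε : ℝ} (hirr : Irrational ε) (h0 : 0 < ε) (h1 : ε < 1) (n : ℕ) :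
    dd ε (n+1) = - (gaussMap^[n] ε) * dd ε n := by
  induction n with
  | zero => simp [dd, qq, pp]
  | succ n ih =>
    have h := cfa_add_gauss hirr h0 h1 n
    have hp := (gauss_iterate hirr h0 h1 n).2.1.ne'
    have hr : dd ε (n+2) = cfa ε n * dd ε (n+1) + dd ε n := by
      unfold dd
      rw [qq_rec, pp_rec]
      push_cast
      ring
    have hg : gaussMap^[n+1] ε = (gaussMap^[n] ε)⁻¹ - cfa ε n := by linarith
    rw [show n + 1 + 1 = n + 2 from rfl, hr, hg, ih]
    field_simp
    ring

lemma abs_dd_succ {ε : ℝ} (hirr : Irrational ε) (h0 : 0 < ε) (h1 : ε < 1) (n : ℕ) :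
    |dd ε (n+1)| = gaussMap^[n] ε * |dd ε n| := by
  rw [dd_succ hirr h0 h1, abs_mul, abs_neg, abs_of_pos (gauss_iterate hirr h0 h1 n).2.1]

lemma abs_dd_pos {ε : ℝ} (hirr : Irrational ε) (h0 : 0 < ε) (h1 : ε < 1) (n : ℕ) :
    0 < |dd ε n| := by
  induction n with
  | zero => simp [dd, qq, pp]
  | succ n ih =>
    rw [abs_dd_succ hirr h0 h1]
    exact mul_pos (gauss_iterate hirr h0 h1 n).2.1 ih

lemma qq_mul_dd {ε : ℝ} (hirr : Irrational ε) (h0 : 0 < ε) (h1 : ε < 1) (n : ℕ) :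
    qq ε (n+1) * |dd ε n| + qq ε n * |dd ε (n+1)| = 1 := by
  induction n with
  | zero => simp [dd, qq, pp]
  | succ n ih =>
    have h := cfa_add_gauss hirr h0 h1 n
    have hp := (gauss_iterate hirr h0 h1 n).2.1.ne'
    have e : |dd ε n| = (gaussMap^[n] ε)⁻¹ * |dd ε (n+1)| := by
      rw [abs_dd_succ hirr h0 h1]
      field_simp
    rw [show n + 1 + 1 = n + 2 from rfl, abs_dd_succ hirr h0 h1 (n+1), qq_rec, ← ih, e, ← h]
    push_cast
    ring

lemma det_qq_pp (ε : ℝ) (n : ℕ) :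
    (qq ε (n+1) : ℤ) * pp ε n - qq ε n * pp ε (n+1) = (-1)^n := by
  induction n with
  | zero => simp [qq, pp]
  | succ n ih =>
    rw [show n + 1 + 1 = n + 2 from rfl, qq_rec, pp_rec, pow_succ, ← ih]
    push_cast
    ring

/-- Convergents are best approximations: no multiple `N ε` with `0 < N < q_{n+1}` comes closer to
an integer than the `n`-th error. -/
lemma best_approx {ε : ℝ} (hirr : Irrational ε) (h0 : 0 < ε) (h1 : ε < 1) (n N : ℕ)
    (hN : 0 < N) (hN' : N < qq ε (n+1)) (P : ℤ) : |dd ε n| ≤ |N * ε - P| := by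
  have hs : ((-1 : ℤ)^n) * (-1)^n = 1 := by rw [← mul_pow]; simp
  have hdet := det_qq_pp ε n
  -- Coordinates of `(N, P)` in the unimodular basis `(qₙ, pₙ)`, `(qₙ₊₁, pₙ₊₁)`.
  obtain ⟨u, v, hu, hv⟩ : ∃ u v : ℤ, (N : ℤ) = u * qq ε n + v * qq ε (n+1) ∧
      P = u * pp ε n + v * pp ε (n+1) := by
    refine ⟨(-1)^n * (P * qq ε (n+1) - N * pp ε (n+1)),
      (-1)^n * (N * pp ε n - P * qq ε n), ?_, ?_⟩
    · linear_combination (-(N : ℤ)) * hs - (N : ℤ) * (-1)^n * hdet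
    · linear_combination (-P) * hs - P * (-1)^n * hdet
  have hθ := gauss_iterate hirr h0 h1 n
  have e : (N : ℝ) * ε - P = (u - v * gaussMap^[n] ε) * dd ε n := by
    have hu' : (N : ℝ) = u * qq ε n + v * qq ε (n+1) := by exact_mod_cast hu
    have hv' : (P : ℝ) = u * pp ε n + v * pp ε (n+1) := by exact_mod_cast hv
    have hd := dd_succ hirr h0 h1 n
    rw [hu', hv', sub_mul, mul_assoc (v : ℝ),
      show gaussMap^[n] ε * dd ε n = - dd ε (n+1) by rw [hd]; ring]
    unfold dd
    ring
  rw [e, abs_mul]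
  have hN1 : (0 : ℤ) < N := by exact_mod_cast hN
  have hN2 : (N : ℤ) < qq ε (n+1) := by exact_mod_cast hN'
  have hq : (0 : ℤ) ≤ qq ε n := by positivity
  have hq' : (0 : ℤ) ≤ qq ε (n+1) := by positivity
  have key : 1 ≤ |(u : ℝ) - v * gaussMap^[n] ε| := by
    rcases lt_trichotomy v 0 with hv0 | hv0 | hv0
    · have hu0 : 1 ≤ u := by
        by_contra hc
        have : u ≤ 0 := by omega
        nlinarith
      have a1 : (1 : ℝ) ≤ u := by exact_mod_cast hu0
      have a2 : (v : ℝ) < 0 := by exact_mod_cast hv0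
      exact le_trans (by nlinarith [hθ.2.1]) (le_abs_self _)
    · subst hv0
      have hu0 : u ≠ 0 := by
        rintro rfl
        simp at hu
        omega
      have := Int.one_le_abs hu0
      simpa using (by exact_mod_cast this : (1 : ℝ) ≤ |(u : ℝ)|)
    · have hu0 : u ≤ -1 := by
        by_contra hc
        have : 0 ≤ u := by omega
        nlinarith
      have a1 : (u : ℝ) ≤ -1 := by exact_mod_cast hu0
      have a2 : (0 : ℝ) < v := by exact_mod_cast hv0
      exact le_trans (by nlinarith [hθ.2.1]) (neg_le_abs _)
  nlinarith [abs_nonneg (dd ε n)]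

/-! ### Orbits of the rotation by `-ε` -/

lemma rotation_dense {ε : ℝ} (hirr : Irrational ε) (x : ℝ) (U : Set (AddCircle (1 : ℝ)))
    (hU : IsOpen U) (hne : U.Nonempty) : ∃ j : ℕ, ((x - j * ε : ℝ) : AddCircle (1 : ℝ)) ∈ U := by
  have hd : DenseRange (fun j : ℕ => j • ((-ε : ℝ) : AddCircle (1 : ℝ))) := by
    rw [← denseRange_zsmul_iff_nsmul]
    exact AddCircle.denseRange_zsmul_coe_iff.2 (by simpa using hirr.neg)
  obtain ⟨j, hj⟩ := hd.exists_mem_open (hU.preimage (continuous_const_add (x : AddCircle (1 : ℝ))))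
    (by
      obtain ⟨z, hz⟩ := hne
      exact ⟨-(x : AddCircle (1 : ℝ)) + z, by simpa using hz⟩)
  refine ⟨j, ?_⟩
  have : ((x - j * ε : ℝ) : AddCircle (1 : ℝ)) = (x : AddCircle (1 : ℝ)) +
      j • ((-ε : ℝ) : AddCircle (1 : ℝ)) := by
    rw [← AddCircle.coe_nsmul, ← AddCircle.coe_add]
    congr 1
    simp
    ring
  rw [this]
  exact hj

lemma rotation_dense_real {ε : ℝ} (hirr : Irrational ε) (x a b : ℝ) (hab : a < b) :
    ∃ j : ℕ, ∃ p : ℤ, a < x - j * ε + p ∧ x - j * ε + p < b := by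
  obtain ⟨j, hj⟩ := rotation_dense hirr x ((fun t : ℝ => (t : AddCircle (1 : ℝ))) '' Set.Ioo a b)
    (QuotientAddGroup.isOpenMap_coe _ isOpen_Ioo) ((Set.nonempty_Ioo.2 hab).image _)
  obtain ⟨t, ht, hjt⟩ := hj
  obtain ⟨p, hp⟩ := (AddCircle.coe_eq_zero_iff (1 : ℝ) (x := t - (x - j * ε))).1 (by
    rw [AddCircle.coe_sub]; exact sub_eq_zero.2 hjt)
  have hp' : (p : ℝ) = t - (x - j * ε) := by simpa using hp
  refine ⟨j, p, ?_, ?_⟩ <;> linarith [ht.1, ht.2]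

/-- Among `q_{n+1} + q_n` consecutive points of a rotation orbit, one lies in any given half-open
arc whose length is the `n`-th approximation error. For the first visit time `j`, going back
`q_{n+1}` steps, or `q_{n+1} + q_n` steps, stays inside the arc. -/
lemma hit {ε : ℝ} (hirr : Irrational ε) (h0 : 0 < ε) (h1 : ε < 1) (n : ℕ) (x c : ℝ) :
    ∃ j : ℕ, j < qq ε (n+1) + qq ε n ∧ ∃ p : ℤ,
      c ≤ x - j * ε + p ∧ x - j * ε + p < c + |dd ε n| := by
  classical
  have hpos := abs_dd_pos hirr h0 h1 n
  have hex : ∃ j : ℕ, ∃ p : ℤ, c ≤ x - j * ε + p ∧ x - j * ε + p < c + |dd ε n| := by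
    obtain ⟨j, p, hp⟩ := rotation_dense_real hirr x c (c + |dd ε n|) (by linarith)
    exact ⟨j, p, hp.1.le, hp.2⟩
  refine ⟨Nat.find hex, ?_, Nat.find_spec hex⟩
  by_contra hc
  push Not at hc
  obtain ⟨p, hp1, hp2⟩ := Nat.find_spec hex
  have hmin := fun m hm => Nat.find_min hex (m := m) hm
  generalize Nat.find hex = j at *
  have hq := one_le_qq hirr h0 h1 n
  have b1 := hmin (j - qq ε (n+1)) (by omega)
  have b2 := hmin (j - (qq ε (n+1) + qq ε n)) (by omega)
  push Not at b1 b2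
  have b1 := b1 (p - pp ε (n+1))
  have b2 := b2 (p - pp ε (n+1) - pp ε n)
  rw [Nat.cast_sub (by omega)] at b1 b2
  push_cast at b1 b2
  have e1 : x - (j - qq ε (n+1)) * ε + (p - pp ε (n+1)) = x - j * ε + p + dd ε (n+1) := by
    unfold dd; ring
  have e2 : x - (j - (qq ε (n+1) + qq ε n)) * ε + (p - pp ε (n+1) - pp ε n)
      = x - j * ε + p + dd ε (n+1) + dd ε n := by
    unfold dd; ring
  rw [e1] at b1
  rw [e2] at b2
  have hd := dd_succ hirr h0 h1 n
  have hθ := gauss_iterate hirr h0 h1 n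
  generalize x - j * ε + p = z at *
  generalize gaussMap^[n] ε = θ at *
  rw [hd] at b1 b2
  rcases le_or_gt 0 (dd ε n) with hs | hs
  · rw [abs_of_nonneg hs] at *
    by_cases hz : c ≤ z + -θ * dd ε n
    · nlinarith [b1 hz]
    · have := b2 (by nlinarith)
      nlinarith
  · rw [abs_of_neg hs] at *
    by_cases hz : c ≤ z + -θ * dd ε n + dd ε n
    · nlinarith [b2 hz]
    · have := b1 (by nlinarith)
      nlinarith

/-! ### The exchange as an induced map of the rotation -/

/-- The return time to `[0, ℓ)` of the rotation by `-ε`, for which `T3 ε ℓ` is the induced map: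
`2` on `I_B`, `1` elsewhere. -/
noncomputable def tau (ε ℓ x : ℝ) : ℕ :=
  if x < ℓ - 1 + ε then 1 else if x < ε then 2 else 1

/-- The number of rotation steps made by `k` steps of `T3 ε ℓ` started at `x`. -/
noncomputable def cc (ε ℓ x : ℝ) : ℕ → ℕ
  | 0 => 0
  | (k+1) => cc ε ℓ x k + tau ε ℓ ((T3 ε ℓ)^[k] x)

lemma one_le_tau (ε ℓ x : ℝ) : 1 ≤ tau ε ℓ x := by
  unfold tau
  split_ifs <;> norm_num

lemma cc_strictMono (ε ℓ x : ℝ) : StrictMono (cc ε ℓ x) :=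
  strictMono_nat_of_lt_succ fun k => by
    have := one_le_tau ε ℓ ((T3 ε ℓ)^[k] x)
    simp only [cc]
    omega

lemma T3_mem {ε ℓ : ℝ} (hl : max ε (1 - ε) < ℓ) (hl1 : ℓ < 1) {x : ℝ}
    (hx : x ∈ Set.Ico 0 ℓ) : T3 ε ℓ x ∈ Set.Ico 0 ℓ := by
  obtain ⟨ha, hb⟩ := max_lt_iff.1 hl
  obtain ⟨hx1, hx2⟩ := hx
  unfold T3
  split_ifs <;> constructor <;> linarith

lemma T3_iterate_mem {ε ℓ : ℝ} (hl : max ε (1 - ε) < ℓ) (hl1 : ℓ < 1) {x : ℝ}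
    (hx : x ∈ Set.Ico 0 ℓ) (k : ℕ) : (T3 ε ℓ)^[k] x ∈ Set.Ico 0 ℓ := by
  induction k with
  | zero => exact hx
  | succ k ih => rw [Function.iterate_succ_apply']; exact T3_mem hl hl1 ih

lemma T3_eq (ε ℓ x : ℝ) : ∃ p : ℤ, T3 ε ℓ x = x - tau ε ℓ x * ε + p := by
  unfold T3 tau
  split_ifs
  · exact ⟨1, by push_cast; ring⟩
  · exact ⟨1, by push_cast; ring⟩
  · exact ⟨0, by push_cast; ring⟩

lemma T3_iterate_eq (ε ℓ x : ℝ) (k : ℕ) :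
    ∃ p : ℤ, (T3 ε ℓ)^[k] x = x - cc ε ℓ x k * ε + p := by
  induction k with
  | zero => exact ⟨0, by simp [cc]⟩
  | succ k ih =>
    obtain ⟨p, hp⟩ := ih
    obtain ⟨p', hp'⟩ := T3_eq ε ℓ ((T3 ε ℓ)^[k] x)
    refine ⟨p + p', ?_⟩
    rw [Function.iterate_succ_apply', hp']
    simp only [cc]
    push_cast
    rw [hp]
    ring

/-- The letter read at `x`. -/
noncomputable def letter (ε ℓ x : ℝ) : L3 :=
  if x < ℓ - 1 + ε then L3.A else if x < ε then L3.B else L3.C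

lemma u3_eq (ε ℓ x : ℝ) (n : ℕ) : u3 ε ℓ x n = letter ε ℓ ((T3 ε ℓ)^[n] x) := rfl

lemma tau_eq_of_letter {ε ℓ x y : ℝ} (h : letter ε ℓ x = letter ε ℓ y) :
    tau ε ℓ x = tau ε ℓ y := by
  unfold letter at h
  unfold tau
  split_ifs at h ⊢ <;> simp_all

lemma T3_sub_of_letter {ε ℓ x y : ℝ} (h : letter ε ℓ x = letter ε ℓ y) :
    T3 ε ℓ x - x = T3 ε ℓ y - y := by
  unfold letter at h
  unfold T3
  split_ifs at h ⊢ <;> ring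

lemma eq_of_eq_add_int {z w : ℝ} {p : ℤ} (hz : 0 ≤ z ∧ z < 1) (hw : 0 ≤ w ∧ w < 1)
    (h : z = w + p) : z = w := by
  have a : (-1 : ℝ) < p := by linarith [hz.1, hw.2]
  have b : (p : ℝ) < 1 := by linarith [hz.2, hw.1]
  have a' : -1 < p := by exact_mod_cast a
  have b' : p < 1 := by exact_mod_cast b
  have : p = 0 := by omega
  simpa [this] using h

/-- Every visit of the rotation orbit of `x` to `[0, ℓ)` is a point of the `T3`-orbit. -/
lemma visit {ε ℓ : ℝ} (hl : max ε (1 - ε) < ℓ) (hl1 : ℓ < 1) {x z : ℝ}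
    (hx : x ∈ Set.Ico 0 ℓ) (hz : z ∈ Set.Ico 0 ℓ) {j : ℕ} {p : ℤ} (hzj : z = x - j * ε + p)
    (k : ℕ) (hj : j ≤ cc ε ℓ x k) :
    ∃ i ≤ k, cc ε ℓ x i = j ∧ (T3 ε ℓ)^[i] x = z := by
  have hfin : ∀ k, cc ε ℓ x k = j → (T3 ε ℓ)^[k] x = z := by
    intro k hk
    obtain ⟨p', hp'⟩ := T3_iterate_eq ε ℓ x k
    have hm := T3_iterate_mem hl hl1 hx k
    refine eq_of_eq_add_int (p := p' - p) ⟨hm.1, hm.2.trans hl1⟩ ⟨hz.1, hz.2.trans hl1⟩ ?_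
    rw [hp', hzj, hk]
    push_cast
    ring
  induction k with
  | zero =>
    have : cc ε ℓ x 0 = j := by simp only [cc] at hj ⊢; omega
    exact ⟨0, le_rfl, this, hfin 0 this⟩
  | succ k ih =>
    by_cases hjk : j ≤ cc ε ℓ x k
    · obtain ⟨i, hi, h⟩ := ih hjk
      exact ⟨i, by omega, h⟩
    by_cases hjk' : cc ε ℓ x (k+1) = j
    · exact ⟨k+1, le_rfl, hjk', hfin (k+1) (by assumption)⟩
    -- Otherwise `j` is the intermediate step of a letter `B`, where the rotation is in `[ℓ, 1)`.
    exfalso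
    simp only [cc] at hj hjk'
    obtain ⟨p', hp'⟩ := T3_iterate_eq ε ℓ x k
    have hm := T3_iterate_mem hl hl1 hx k
    set y := (T3 ε ℓ)^[k] x with hy
    unfold tau at hj hjk'
    obtain ⟨ha, hb⟩ := max_lt_iff.1 hl
    split_ifs at hj hjk' with c1 c2
    · omega
    · have e : j = cc ε ℓ x k + 1 := by omega
      have := eq_of_eq_add_int (z := z) (w := y + 1 - ε) (p := p - p' - 1)
        ⟨hz.1, hz.2.trans hl1⟩ ⟨by linarith [hm.1], by linarith⟩ (by
          rw [hzj, hp', e]; push_cast; ring)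
      linarith [hz.2]
    · omega

/-! ### Upper bound -/

lemma shift_of_period {ε ℓ x : ℝ} {n m : ℕ}
    (h : ∀ k < m, u3 ε ℓ x (k+n) = u3 ε ℓ x k) (k : ℕ) (hk : k ≤ m) :
    (T3 ε ℓ)^[k+n] x - (T3 ε ℓ)^[k] x = (T3 ε ℓ)^[n] x - x ∧
      cc ε ℓ x (k+n) = cc ε ℓ x k + cc ε ℓ x n := by
  induction k with
  | zero => simp [cc]
  | succ k ih =>
    obtain ⟨ih1, ih2⟩ := ih (by omega)
    have hl := h k (by omega)
    rw [u3_eq, u3_eq] at hl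
    have e1 := T3_sub_of_letter hl
    have e2 := tau_eq_of_letter hl
    rw [show k + 1 + n = (k + n) + 1 by ring, Function.iterate_succ_apply',
      Function.iterate_succ_apply']
    refine ⟨by linarith, ?_⟩
    simp only [cc]
    omega

lemma cc_mul_of_period {ε ℓ x : ℝ} {n t : ℕ}
    (h : ∀ k < t * n, u3 ε ℓ x (k+n) = u3 ε ℓ x k) : cc ε ℓ x (t * n) = t * cc ε ℓ x n := by
  have : ∀ i ≤ t, cc ε ℓ x (i * n) = i * cc ε ℓ x n := by
    intro i hi
    induction i with
    | zero => simp [cc]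
    | succ i ih =>
      have h2 := (shift_of_period h (i * n) (Nat.mul_le_mul_right n (by omega))).2
      rw [show (i + 1) * n = i * n + n by ring, h2, ih (by omega)]
      ring
  exact this t le_rfl

/-- No `(K+3)`-rd power: a run of `(K+2) n` coincidences between letters at distance `n` is
impossible. Along such a run `T3^[n]` acts as the translation by one fixed `δ`, so a half-open end
interval of `[0, ℓ)` of length `|δ|` is missed, contradicting `hit`. -/
lemma no_high_power {ε ℓ : ℝ} (hirr : Irrational ε) (h0 : 0 < ε) (h1 : ε < 1)
    (hl : max ε (1 - ε) < ℓ) (hl1 : ℓ < 1) {x : ℝ} (hx : x ∈ Set.Ico 0 ℓ) {K : ℕ}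
    (hK : ∀ n, cfa ε n ≤ K) {n : ℕ} (hn : 0 < n)
    (h : ∀ k < (K+2) * n, u3 ε ℓ x (k+n) = u3 ε ℓ x k) : False := by
  classical
  have hcc := cc_mul_of_period h
  have hshift := fun k hk => (shift_of_period h k hk).1
  obtain ⟨P, hP⟩ := T3_iterate_eq ε ℓ x n
  have hN : 0 < cc ε ℓ x n := by
    have := cc_strictMono ε ℓ x hn
    omega
  set N := cc ε ℓ x n with hNdef
  set δ := (T3 ε ℓ)^[n] x - x with hδ
  have hδ' : |δ| = |N * ε - P| := by
    rw [hδ, hP, ← abs_neg]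
    congr 1
    ring
  -- Choice of the index with `q_r ≤ N < q_{r+1}`.
  have hex : ∃ r, N < qq ε r := ⟨N + 1 + 1, le_qq hirr h0 h1 (N+1)⟩
  obtain ⟨r, hr1, hr2⟩ : ∃ r, qq ε (r+1) ≤ N ∧ N < qq ε (r+2) := by
    have hs := Nat.find_spec hex
    have hm := fun m hm => Nat.find_min hex (m := m) hm
    generalize Nat.find hex = r at *
    rcases r with _ | _ | r
    · simp [qq] at hs
    · simp [qq] at hs; omega
    · exact ⟨r, not_lt.1 (hm (r+1) (by omega)), hs⟩
  have hbest := best_approx hirr h0 h1 (r+1) N hN hr2 P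
  rw [← hδ'] at hbest
  have hwin : qq ε (r+2) + qq ε (r+1) ≤ (K+2) * N := by
    have a1 := hK r
    have a2 := qq_le_succ hirr h0 h1 r
    rw [qq_rec]
    nlinarith [Nat.mul_le_mul_right (qq ε (r+1)) a1, Nat.mul_le_mul_left (K+2) hr1]
  have hpos := abs_dd_pos hirr h0 h1 (r+1)
  have hxn := T3_iterate_mem hl hl1 hx n
  have main : ∀ c, 0 ≤ c → c + |dd ε (r+1)| ≤ ℓ →
      ∃ k ≤ (K+2) * n, (T3 ε ℓ)^[k] x ∈ Set.Ico c (c + |dd ε (r+1)|) := by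
    intro c hc1 hc2
    obtain ⟨j, hj, p, hp1, hp2⟩ := hit hirr h0 h1 (r+1) x c
    obtain ⟨k, hk, -, hkz⟩ := visit hl hl1 hx (z := x - j * ε + p)
      ⟨by linarith, by linarith⟩ rfl ((K+2) * n) (by
        rw [hcc]; exact hj.le.trans hwin)
    exact ⟨k, hk, by rw [hkz]; exact ⟨hp1, hp2⟩⟩
  rcases le_or_gt 0 δ with hs | hs
  · rw [abs_of_nonneg hs] at hbest
    obtain ⟨k, hk, hk1, hk2⟩ := main (ℓ - |dd ε (r+1)|) (by linarith [hx.1, hxn.2]) (by linarith)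
    have := hshift k hk
    have hm := T3_iterate_mem hl hl1 hx (k+n)
    linarith [hm.2]
  · rw [abs_of_neg hs] at hbest
    obtain ⟨k, hk, hk1, hk2⟩ := main 0 le_rfl (by linarith [hx.2, hxn.1])
    have := hshift k hk
    have hm := T3_iterate_mem hl hl1 hx (k+n)
    linarith [hm.1]

/-! ### Lower bound -/

/-- `Safe ε ℓ δ M y`: at the first `M + 1` points of the rotation orbit of `y`, the translation
by `δ` crosses neither of the cut points `0` and `ℓ` of the circle. -/
def Safe (ε ℓ δ : ℝ) (M : ℕ) (y : ℝ) : Prop :=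
  ∀ j ≤ M, ∀ v : ℝ, 0 ≤ v → v < 1 → (∃ p : ℤ, v = y - j * ε + p) →
    0 ≤ v + δ ∧ v + δ < 1 ∧ (v < ℓ ↔ v + δ < ℓ)

/-- If the `2 (M + 1)` forbidden arcs of length `|δ|` have total length less than `1`, some
point of the rotation orbit avoids them all. -/
lemma exists_avoid {ε : ℝ} (hirr : Irrational ε) (x0 ℓ δ : ℝ) (M : ℕ)
    (hM : 2 * ((M : ℝ) + 1) * |δ| < 1) :
    ∃ i : ℕ, ∀ j ≤ M, ∀ p : ℤ,
      |δ| / 2 < |x0 - i * ε - j * ε + p - (ℓ - δ / 2)| ∧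
      |δ| / 2 < |x0 - i * ε - j * ε + p + δ / 2| := by
  let F : ℕ → Set (AddCircle (1 : ℝ)) := fun j =>
    Metric.closedBall (((ℓ - δ / 2 + j * ε : ℝ)) : AddCircle (1 : ℝ)) (|δ| / 2) ∪
      Metric.closedBall (((- (δ / 2) + j * ε : ℝ)) : AddCircle (1 : ℝ)) (|δ| / 2)
  let S : Set (AddCircle (1 : ℝ)) := ⋃ j ∈ Finset.range (M + 1), F j
  have hclosed : IsClosed S := by
    refine isClosed_biUnion_finset fun j _ => ?_
    exact Metric.isClosed_closedBall.union Metric.isClosed_closedBall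
  have hball : ∀ c : AddCircle (1 : ℝ),
      MeasureTheory.volume (Metric.closedBall c (|δ| / 2)) ≤ ENNReal.ofReal |δ| := by
    intro c
    rw [AddCircle.volume_closedBall]
    apply ENNReal.ofReal_le_ofReal
    exact (min_le_right _ _).trans (by linarith)
  have hvol : MeasureTheory.volume S < 1 := by
    calc MeasureTheory.volume S ≤ ∑ j ∈ Finset.range (M + 1), MeasureTheory.volume (F j) :=
          MeasureTheory.measure_biUnion_finset_le _ _
      _ ≤ ∑ j ∈ Finset.range (M + 1), (ENNReal.ofReal |δ| + ENNReal.ofReal |δ|) :=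
          Finset.sum_le_sum fun j _ =>
            (MeasureTheory.measure_union_le _ _).trans (add_le_add (hball _) (hball _))
      _ = ENNReal.ofReal (2 * ((M : ℝ) + 1) * |δ|) := by
          rw [Finset.sum_const, Finset.card_range, nsmul_eq_mul,
            ← ENNReal.ofReal_add (abs_nonneg _) (abs_nonneg _), ← ENNReal.ofReal_natCast,
            ← ENNReal.ofReal_mul (by positivity)]
          congr 1
          push_cast
          ring
      _ < 1 := by
          rw [← ENNReal.ofReal_one]
          exact (ENNReal.ofReal_lt_ofReal_iff one_pos).2 hM
  have hne : (Sᶜ).Nonempty := by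
    rw [Set.nonempty_compl]
    intro h
    rw [h, AddCircle.measure_univ] at hvol
    simp at hvol
  obtain ⟨i, hi⟩ := rotation_dense hirr x0 Sᶜ hclosed.isOpen_compl hne
  refine ⟨i, fun j hj p => ?_⟩
  have hnot : ((x0 - i * ε : ℝ) : AddCircle (1 : ℝ)) ∉ F j := by
    intro h
    exact hi (Set.mem_biUnion (Finset.mem_coe.2 (Finset.mem_range.2 (by omega))) h)
  have hnorm : ∀ c : ℝ, ((x0 - i * ε : ℝ) : AddCircle (1 : ℝ)) ∉
      Metric.closedBall (((c + j * ε : ℝ)) : AddCircle (1 : ℝ)) (|δ| / 2) →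
      |δ| / 2 < |x0 - i * ε - j * ε + p - c| := by
    intro c hc
    rw [Metric.mem_closedBall, not_le, dist_eq_norm, ← AddCircle.coe_sub,
      UnitAddCircle.norm_eq] at hc
    refine hc.trans_le ?_
    have := round_le (x0 - i * ε - (c + j * ε)) (-p)
    push_cast at this
    rw [show x0 - i * ε - j * ε + p - c = x0 - i * ε - (c + j * ε) - -(p : ℝ) by ring]
    exact this
  have hn : _ ∧ _ := not_or.1 hnot
  refine ⟨hnorm _ hn.1, ?_⟩
  have := hnorm _ hn.2
  rwa [sub_neg_eq_add] at this

lemma safe_of_avoid {ε ℓ δ y : ℝ} {M : ℕ}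
    (h : ∀ j ≤ M, ∀ p : ℤ, |δ| / 2 < |y - j * ε + p - (ℓ - δ / 2)| ∧
      |δ| / 2 < |y - j * ε + p + δ / 2|) : Safe ε ℓ δ M y := by
  rintro j hj v hv0 hv1 ⟨p, hp⟩
  have h1 := (h j hj p).1
  have h2 := (h j hj p).2
  have h3 := (h j hj (p - 1)).2
  push_cast at h3
  rw [show y - j * ε + ((p : ℝ) - 1) + δ / 2 = v - 1 + δ / 2 by rw [hp]; ring] at h3
  rw [← hp] at h1 h2
  rcases le_or_gt 0 δ with hs | hs
  · rw [abs_of_nonneg hs] at *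
    refine ⟨by linarith, ?_, ?_, ?_⟩
    · rcases lt_abs.1 h3 with h | h <;> linarith
    · intro _
      rcases lt_abs.1 h1 with h | h <;> linarith
    · intro _
      linarith
  · rw [abs_of_neg hs] at *
    refine ⟨?_, by linarith, ?_, ?_⟩
    · rcases lt_abs.1 h2 with h | h <;> linarith
    · intro _
      linarith
    · intro _
      rcases lt_abs.1 h1 with h | h <;> linarith

lemma Safe.congr {ε ℓ δ y y' : ℝ} {M : ℕ} (h : Safe ε ℓ δ M y) (q : ℤ) (hq : y' = y + q) :
    Safe ε ℓ δ M y' := by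
  rintro j hj v hv0 hv1 ⟨p, hp⟩
  exact h j hj v hv0 hv1 ⟨q + p, by rw [hp, hq]; push_cast; ring⟩

/-- The safe starting point can be taken on the `T3`-orbit of `x0`: if the rotation orbit provides
a safe point in `[ℓ, 1)`, the point preceding it lies in `I_B` and is safe too. -/
lemma exists_safe {ε ℓ : ℝ} (hirr : Irrational ε)
    (hl : max ε (1 - ε) < ℓ) (hl1 : ℓ < 1) {x0 : ℝ} (hx0 : x0 ∈ Set.Ico 0 ℓ) {δ : ℝ} {M : ℕ}
    (hM : 2 * ((M : ℝ) + 1) * |δ| < 1) :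
    ∃ i : ℕ, Safe ε ℓ δ M ((T3 ε ℓ)^[i] x0) := by
  obtain ⟨ha, hb⟩ := max_lt_iff.1 hl
  obtain ⟨j0, hj0⟩ := exists_avoid hirr x0 ℓ δ M hM
  set y := Int.fract (x0 - j0 * ε) with hy
  have hyf : y = x0 - j0 * ε + ((-⌊x0 - j0 * ε⌋ : ℤ) : ℝ) := by
    rw [hy, ← Int.self_sub_floor]; push_cast; ring
  have hsafe : Safe ε ℓ δ M y := (safe_of_avoid hj0).congr _ hyf
  have hy0 : 0 ≤ y := Int.fract_nonneg _
  have hy1 : y < 1 := Int.fract_lt_one _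
  rcases lt_or_ge y ℓ with hyl | hyl
  · obtain ⟨i, -, -, hi⟩ := visit hl hl1 hx0 ⟨hy0, hyl⟩ hyf j0 (cc_strictMono ε ℓ x0).le_apply
    exact ⟨i, by rw [hi]; exact hsafe⟩
  · have hj : j0 ≠ 0 := by
      rintro rfl
      have : y = x0 := by
        rw [hy]
        simp only [Nat.cast_zero, zero_mul, sub_zero]
        exact Int.fract_eq_self.2 ⟨hx0.1, hx0.2.trans hl1⟩
      linarith [hx0.2]
    obtain ⟨j1, rfl⟩ := Nat.exists_eq_succ_of_ne_zero hj
    obtain ⟨i, -, -, hi⟩ := visit hl hl1 hx0 (z := y + ε - 1) ⟨by linarith, by linarith⟩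
      (j := j1) (p := -⌊x0 - (j1.succ : ℕ) * ε⌋ - 1) (by
        rw [hyf]; push_cast; ring) j1 (cc_strictMono ε ℓ x0).le_apply
    refine ⟨i, ?_⟩
    rw [hi]
    rintro j hj v hv0 hv1 ⟨p, hp⟩
    rcases j with _ | j
    · have hv : v = y + ε - 1 := by
        refine eq_of_eq_add_int (p := p) ⟨hv0, hv1⟩ ⟨by linarith, by linarith⟩ ?_
        rw [hp]; simp
      obtain ⟨s1, s2, s3⟩ := hsafe 0 (Nat.zero_le _) y hy0 hy1 ⟨0, by simp⟩
      have s4 : ℓ ≤ y + δ := by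
        by_contra hc
        linarith [s3.2 (not_le.1 hc)]
      subst hv
      refine ⟨by linarith, by linarith, ⟨fun _ => by linarith, fun _ => by linarith⟩⟩
    · exact hsafe j (by omega) v hv0 hv1 ⟨p - 1, by rw [hp]; push_cast; ring⟩

lemma letter_eq_of_safe {ε ℓ δ x : ℝ} (hl : max ε (1 - ε) < ℓ) (hx : x ∈ Set.Ico 0 ℓ)
    (hl1 : ℓ < 1)
    (h : ∀ v : ℝ, 0 ≤ v → v < 1 → (∃ p : ℤ, v = x - ε + p) →
      0 ≤ v + δ ∧ v + δ < 1 ∧ (v < ℓ ↔ v + δ < ℓ)) :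
    letter ε ℓ (x + δ) = letter ε ℓ x := by
  obtain ⟨ha, hb⟩ := max_lt_iff.1 hl
  obtain ⟨hx1, hx2⟩ := hx
  unfold letter
  rcases lt_or_ge x ε with hxe | hxe
  · obtain ⟨s1, s2, s3⟩ := h (x + 1 - ε) (by linarith) (by linarith) ⟨1, by push_cast; ring⟩
    have t2 : x + δ < ε := by linarith
    have t3 : x < ℓ - 1 + ε ↔ x + δ < ℓ - 1 + ε :=
      ⟨fun hh => by linarith [s3.1 (by linarith)], fun hh => by linarith [s3.2 (by linarith)]⟩
    simp only [hxe, t2, t3]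
  · obtain ⟨s1, s2, s3⟩ := h (x - ε) (by linarith) (by linarith) ⟨0, by simp⟩
    have t1 : ¬ x < ε := by linarith
    have t2 : ¬ x + δ < ε := by linarith
    have t3 : ¬ x < ℓ - 1 + ε := by linarith
    have t4 : ¬ x + δ < ℓ - 1 + ε := by linarith
    simp only [t1, t2, t3, t4]

/-- A safe point starts a `(t+1)`-st power of a factor whose letters make up `N` rotation steps. -/
lemma period_of_safe {ε ℓ : ℝ} (hl : max ε (1 - ε) < ℓ) (hl1 : ℓ < 1) {x : ℝ} (hx : x ∈ Set.Ico 0 ℓ)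
    {N t : ℕ} {P : ℤ}
    (hN : 0 < N) (hs : Safe ε ℓ (P - N * ε) (t * N) x) :
    ∃ n, 0 < n ∧ ∀ k < t * n, u3 ε ℓ x (k+n) = u3 ε ℓ x k := by
  set δ : ℝ := P - N * ε with hδ
  have hx' : x + δ ∈ Set.Ico 0 ℓ := by
    obtain ⟨s1, s2, s3⟩ := hs 0 (Nat.zero_le _) x hx.1 (hx.2.trans hl1) ⟨0, by simp⟩
    exact ⟨s1, s3.1 hx.2⟩
  obtain ⟨n, -, hn, hnx⟩ := visit hl hl1 hx hx' (j := N) (p := P) (by rw [hδ]; ring) N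
    (cc_strictMono ε ℓ x).le_apply
  have hlet : ∀ k, cc ε ℓ x k < t * N → (T3 ε ℓ)^[k+n] x = (T3 ε ℓ)^[k] x + δ →
      letter ε ℓ ((T3 ε ℓ)^[k+n] x) = letter ε ℓ ((T3 ε ℓ)^[k] x) := by
    intro k hk hkn
    rw [hkn]
    refine letter_eq_of_safe hl (T3_iterate_mem hl hl1 hx k) hl1 ?_
    rintro v hv0 hv1 ⟨p, hp⟩
    obtain ⟨p', hp'⟩ := T3_iterate_eq ε ℓ x k
    exact hs (cc ε ℓ x k + 1) (by omega) v hv0 hv1 ⟨p' + p, by rw [hp, hp']; push_cast; ring⟩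
  have hstep : ∀ k, cc ε ℓ x k ≤ t * N →
      (T3 ε ℓ)^[k+n] x = (T3 ε ℓ)^[k] x + δ ∧ cc ε ℓ x (k+n) = cc ε ℓ x k + N := by
    intro k
    induction k with
    | zero => intro _; simpa [cc, hn] using hnx
    | succ k ih =>
      intro hk
      have hlt : cc ε ℓ x k < t * N := (cc_strictMono ε ℓ x (Nat.lt_succ_self k)).trans_le hk
      obtain ⟨e1, e2⟩ := ih hlt.le
      have hle := hlet k hlt e1
      have f1 := T3_sub_of_letter hle
      have f2 := tau_eq_of_letter hle
      rw [show k + 1 + n = (k + n) + 1 by ring, Function.iterate_succ_apply',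
        Function.iterate_succ_apply']
      refine ⟨by linarith, ?_⟩
      simp only [cc]
      omega
  have hmul : ∀ i ≤ t, cc ε ℓ x (i * n) = i * N := by
    intro i hi
    induction i with
    | zero => simp [cc]
    | succ i ih =>
      have e := ih (by omega)
      have := (hstep (i * n) (by rw [e]; exact Nat.mul_le_mul_right N (by omega))).2
      rw [show (i + 1) * n = i * n + n by ring, this, e]
      ring
  refine ⟨n, ?_, fun k hk => ?_⟩
  · rcases Nat.eq_zero_or_pos n with h | h
    · subst h; simp only [cc] at hn; omega
    · exact h
  · have hc : cc ε ℓ x k < t * N := by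
      rw [← hmul t le_rfl]
      exact cc_strictMono ε ℓ x hk
    rw [u3_eq, u3_eq]
    exact hlet k hc (hstep k hc.le).1

/-! ### From periodic runs to the index -/

lemma eq_mod_of_period {α : Type*} (u : ℕ → α) {n t : ℕ} (hn : 0 < n)
    (h : ∀ k < t * n, u (k+n) = u k) (j : ℕ) (hj : j < (t+1) * n) : u j = u (j % n) := by
  induction j using Nat.strong_induction_on with
  | _ j ih =>
    rcases lt_or_ge j n with hjn | hjn
    · rw [Nat.mod_eq_of_lt hjn]
    · obtain ⟨k, rfl⟩ := Nat.exists_eq_add_of_le' hjn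
      have hk : k < t * n := by
        rw [add_mul, one_mul] at hj
        omega
      rw [h k hk, Nat.add_mod_right]
      exact ih k (by omega) (by rw [add_mul]; omega)

lemma le_wordIndex {α : Type*} [Inhabited α] (u : ℕ → α) (i : ℕ) {n t : ℕ} (hn : 0 < n)
    (h : ∀ k < t * n, u (i + (k+n)) = u (i + k)) : ((t + 1 : ℕ) : EReal) ≤ wordIndex u := by
  set w : List α := (List.range n).map fun j => u (i + j) with hw
  have hlen : w.length = n := by simp [hw]
  have h1 : factorIndex u w ≤ wordIndex u := by
    refine le_sSup ⟨w, ?_, ⟨i, by rw [hlen]⟩, rfl⟩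
    intro h0
    rw [h0] at hlen
    simp at hlen
    omega
  refine le_trans (le_sSup ?_) h1
  refine ⟨(t+1) * n, by rw [hlen]; nlinarith, ⟨i, ?_⟩, ?_⟩
  · have hl2 : (powPrefix w ((t+1) * n)).length = (t+1) * n := by simp [powPrefix]
    rw [hl2]
    unfold powPrefix
    refine List.map_congr_left fun j hj => ?_
    have hj' : j < (t+1) * n := List.mem_range.1 hj
    have hm : j % n < n := Nat.mod_lt _ hn
    have e := eq_mod_of_period (fun j => u (i + j)) hn h j hj'
    rw [hlen, e, hw]
    simp [List.getD, hm]
  · rw [hlen]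
    have : (n : ℝ) ≠ 0 := by positivity
    rw [← EReal.coe_natCast]
    congr 1
    push_cast
    field_simp

lemma wordIndex_le {α : Type*} [Inhabited α] (u : ℕ → α) (t : ℕ)
    (h : ∀ i n : ℕ, 0 < n → ¬ ∀ k < t * n, u (i + (k+n)) = u (i + k)) :
    wordIndex u ≤ (((t : ℝ) + 1 : ℝ) : EReal) := by
  refine sSup_le ?_
  rintro _ ⟨w, hw, -, rfl⟩
  refine sSup_le ?_
  rintro _ ⟨m, -, ⟨i, hi⟩, rfl⟩
  have hn : 0 < w.length := List.length_pos_iff.2 hw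
  have hl2 : (powPrefix w m).length = m := by simp [powPrefix]
  rw [hl2] at hi
  have hu : ∀ j < m, u (i + j) = w.getD (j % w.length) default := by
    intro j hj
    unfold powPrefix at hi
    exact (List.map_inj_left.1 hi j (List.mem_range.2 hj)).symm
  have hm : m < (t+1) * w.length := by
    by_contra hc
    push Not at hc
    rw [add_mul, one_mul] at hc
    refine h i w.length hn fun k hk => ?_
    rw [hu _ (by omega), hu _ (by omega), Nat.add_mod_right]
  rw [EReal.coe_le_coe_iff, div_le_iff₀ (by exact_mod_cast hn)]
  exact_mod_cast hm.le

lemma u3_add (ε ℓ x : ℝ) (i k : ℕ) : u3 ε ℓ x (i + k) = u3 ε ℓ ((T3 ε ℓ)^[i] x) k := by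
  rw [u3_eq, u3_eq, ← Function.iterate_add_apply, add_comm i k]

/-- if the partial quotients of `ε` are bounded with supremum `K`, then
`⌊K/2⌋ ≤ ind(u_{ε,ℓ,x0}) ≤ K + 3`. -/
theorem threeIet_index_bounds
    (ε ℓ x0 : ℝ) (hirr : Irrational ε) (h0 : 0 < ε) (h1 : ε < 1)
    (hl : max ε (1 - ε) < ℓ) (hl1 : ℓ < 1) (hx0 : x0 ∈ Set.Ico 0 ℓ)
    (K : ℕ) (hK : IsLUB (Set.range (cfa ε)) K) :
    ((K / 2 : ℕ) : EReal) ≤ wordIndex (u3 ε ℓ x0) ∧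
      wordIndex (u3 ε ℓ x0) ≤ (((K : ℝ) + 3 : ℝ) : EReal) := by
  have hle : ∀ n, cfa ε n ≤ K := fun n => hK.1 ⟨n, rfl⟩
  constructor
  · by_cases hK2 : K / 2 ≤ 1
    · refine le_trans ?_ (le_wordIndex (u3 ε ℓ x0) 0 (n := 1) (t := 0) one_pos (by simp))
      exact_mod_cast hK2
    · obtain ⟨r, hr⟩ : K ∈ Set.range (cfa ε) := by
        rw [← hK.csSup_eq (Set.range_nonempty _)]
        exact Nat.sSup_mem (Set.range_nonempty _) hK.bddAbove
      obtain ⟨t, ht⟩ : ∃ t, K / 2 = t + 1 := ⟨K / 2 - 1, by omega⟩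
      have hq := one_le_qq hirr h0 h1 r
      set N := qq ε (r+1) with hN
      obtain ⟨P, hP⟩ : ∃ P : ℤ, P = (pp ε (r+1) : ℤ) := ⟨_, rfl⟩
      have hd : |(P : ℝ) - N * ε| = |dd ε (r+1)| := by
        rw [← abs_neg]
        congr 1
        rw [dd, hP, hN]
        push_cast
        ring
      -- `2 (t N + 1) ≤ K N ≤ q_{r+2}`, and `q_{r+2} |dd| < 1`.
      have hM : 2 * (((t * N : ℕ) : ℝ) + 1) * |(P : ℝ) - N * ε| < 1 := by
        rw [hd]
        have hpos := abs_dd_pos hirr h0 h1 (r+1)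
        have hpos2 := abs_dd_pos hirr h0 h1 (r+2)
        have hid := qq_mul_dd hirr h0 h1 (r+1)
        have hN1 : 2 * (t * N + 1) ≤ qq ε (r+2) := by
          have : 2 * (t + 1) ≤ K := by omega
          rw [qq_rec, hr]
          nlinarith
        have hN2 : 2 * (((t * N : ℕ) : ℝ) + 1) ≤ qq ε (r+2) := by exact_mod_cast hN1
        have hN3 : (1 : ℝ) ≤ N := by exact_mod_cast hq
        have e : r + 1 + 1 = r + 2 := rfl
        rw [e, ← hN] at hid
        nlinarith
      obtain ⟨i, hi⟩ := exists_safe hirr hl hl1 hx0 hM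
      obtain ⟨n, hn, hper⟩ := period_of_safe hl hl1 (T3_iterate_mem hl hl1 hx0 i) hq hi
      rw [ht]
      refine le_wordIndex _ i hn fun k hk => ?_
      rw [u3_add ε ℓ x0 i, u3_add ε ℓ x0 i]
      exact hper k hk
  · have h := wordIndex_le (u3 ε ℓ x0) (K+2) (fun i n hn hper =>
      no_high_power hirr h0 h1 hl hl1 (T3_iterate_mem hl hl1 hx0 i) hle hn fun k hk => by
        rw [← u3_add, ← u3_add]
        exact hper k hk)
    convert h using 2
    push_cast
    ring
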